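/- There is an absolute constant C such that for every α ∈ (0, 1/1000]: ‖Γ‖_{W^{7,∞}} ≤ C, ‖((1+R)²/R) Ω̄‖_{W^{7,∞}} + ‖((1+R)²/R) η̄‖_{W^{7,∞}} ≤ C α, and ‖D_β Ω̄‖_{W^{7,∞}} + ‖D_β η̄‖_{W^{7,∞}} ≤ C α². In particular Γ, Ω̄, η̄ all lie in W^{7,∞}. -/

import Mathlib

open Real MeasureTheory Set

noncomputable section

namespace Paper

/-- The domain `(0,∞) × (0,π/2)` in the `(R,β)` variables. -/
def Qdom : Set (ℝ × ℝ) := Set.Ioi (0:ℝ) ×ˢ Set.Ioo (0:ℝ) (Real.pi/2)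

/-- Inner product `⟨f,g⟩ = ∫₀^∞ ∫₀^{π/2} f g dβ dR`. -/
def inner2 (f g : ℝ → ℝ → ℝ) : ℝ :=
  ∫ R in Set.Ioi (0:ℝ), ∫ β in Set.Ioo (0:ℝ) (Real.pi/2), f R β * g R β

/-- The `L²` norm `‖f‖₂`. -/
def norm2 (f : ℝ → ℝ → ℝ) : ℝ := Real.sqrt (inner2 f f)

/-- `‖h‖_{L²(R)}` for functions of `R` alone. -/
def normR (h : ℝ → ℝ) : ℝ := Real.sqrt (∫ R in Set.Ioi (0:ℝ), (h R)^2)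

/-- `D_R = R ∂_R`. -/
def DR (f : ℝ → ℝ → ℝ) : ℝ → ℝ → ℝ := fun R β => R * deriv (fun r => f r β) R

/-- `D_R` for functions of `R` alone. -/
def DR1 (h : ℝ → ℝ) : ℝ → ℝ := fun R => R * deriv h R

/-- `D_β = sin(2β) ∂_β`. -/
def Dbeta (f : ℝ → ℝ → ℝ) : ℝ → ℝ → ℝ :=
  fun R β => Real.sin (2*β) * deriv (fun b => f R b) β

/-- `L₁₂(Ω)(R) = ∫_R^∞ ∫₀^{π/2} Ω(s,β) sin(2β) s⁻¹ dβ ds`. -/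
def L12 (Ω : ℝ → ℝ → ℝ) (R : ℝ) : ℝ :=
  ∫ s in Set.Ioi R, ∫ β in Set.Ioo (0:ℝ) (Real.pi/2), Ω s β * Real.sin (2*β) / s

/-- `L̃₁₂(Ω)(R) = L₁₂(Ω)(R) − L₁₂(Ω)(0)`. -/
def tL12 (Ω : ℝ → ℝ → ℝ) (R : ℝ) : ℝ := L12 Ω R - L12 Ω 0

/-- Compact support contained in the open domain `(0,∞)×(0,π/2)`. -/
def suppIn (f : ℝ → ℝ → ℝ) : Prop :=
  ∃ K : Set (ℝ × ℝ), IsCompact K ∧ K ⊆ Qdom ∧ ∀ x y : ℝ, (x, y) ∉ K → f x y = 0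

/-- Integrability over the domain. -/
def Integrable2 (f : ℝ → ℝ → ℝ) : Prop :=
  MeasureTheory.IntegrableOn (Function.uncurry f) Qdom

/-- `Γ(β) = (cos β)^α`. -/
def Γf (α : ℝ) (β : ℝ) : ℝ := Real.cos β ^ α

/-- The normalizing constant `c = (2/π)∫₀^{π/2} Γ(β) sin(2β) dβ`. -/
def cst (α : ℝ) : ℝ :=
  (2/Real.pi) * ∫ β in Set.Ioo (0:ℝ) (Real.pi/2), Γf α β * Real.sin (2*β)

/-- The approximate profile `Ω̄`. -/
def Ωbar (α : ℝ) : ℝ → ℝ → ℝ := fun R β => (α / cst α) * Γf α β * (3*R/(1+R)^2)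

/-- The approximate profile `η̄`. -/
def ηbar (α : ℝ) : ℝ → ℝ → ℝ := fun R β => (α / cst α) * Γf α β * (6*R/(1+R)^3)

/-- The singular weight `φ₁ = (1+R)⁴R⁻⁴ sin(2β)^{-σ}`, `σ = 99/100`. -/
def phi1 : ℝ → ℝ → ℝ := fun R β => (1+R)^4 / R^4 * Real.sin (2*β) ^ (-(99/100 : ℝ))

/-- The singular weight `φ₂ = (1+R)⁴R⁻⁴ sin(2β)^{-γ}`, `γ = 1 + α/10`. -/
def phi2 (α : ℝ) : ℝ → ℝ → ℝ := fun R β => (1+R)^4 / R^4 * Real.sin (2*β) ^ (-(1 + α/10))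

/-- The singular weight `ψ₁ = (1+R)⁴R⁻⁴ (sin β cos β)^{-σ}`. -/
def psi1 : ℝ → ℝ → ℝ := fun R β =>
  (1+R)^4 / R^4 * (Real.sin β * Real.cos β) ^ (-(99/100 : ℝ))

/-- The singular weight `ψ₂ = (1+R)⁴R⁻⁴ (sin β)^{-σ}(cos β)^{-γ}`. -/
def psi2 (α : ℝ) : ℝ → ℝ → ℝ := fun R β =>
  (1+R)^4 / R^4 * Real.sin β ^ (-(99/100 : ℝ)) * Real.cos β ^ (-(1 + α/10))

/-- `c_ω = −(2/(πα)) L₁₂(Ω)(0)`. -/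
def cω (α : ℝ) (Ω : ℝ → ℝ → ℝ) : ℝ := -(2/(Real.pi*α)) * L12 Ω 0

/-- The linearized operator `L₁`. -/
def opL1 (α : ℝ) (Ω η : ℝ → ℝ → ℝ) : ℝ → ℝ → ℝ := fun R β =>
  - DR Ω R β - (3/(1+R)) * Dbeta Ω R β - Ω R β + η R β
  + cω α Ω * (Ωbar α R β - DR (Ωbar α) R β)

/-- The linearized operator `L₂`. -/
def opL2 (α : ℝ) (Ω η : ℝ → ℝ → ℝ) : ℝ → ℝ → ℝ := fun R β =>
  - DR η R β - (3/(1+R)) * Dbeta η R β + (-2 + 3/(1+R)) * η R β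
  + (2/(Real.pi*α)) * tL12 Ω R * ηbar α R β
  + cω α Ω * (ηbar α R β - DR (ηbar α) R β)

/-- `ξ̄` in Cartesian variables. -/
def ξbarC (α : ℝ) (x y : ℝ) : ℝ :=
  -(18*α^2 / cst α) * ∫ z in Set.Ioo (0:ℝ) x,
      (y/(y^2+z^2)) * (z ^ α * (z^2+y^2) ^ (α/2) / (1 + (z^2+y^2) ^ (α/2))^4)

/-- `ξ̄` in the `(R,β)` variables, via `x = R^{1/α} cos β`, `y = R^{1/α} sin β`. -/
def ξbar (α : ℝ) : ℝ → ℝ → ℝ := fun R β =>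
  ξbarC α (R ^ (1/α) * Real.cos β) (R ^ (1/α) * Real.sin β)

/-- The linearized operator `L₃`. -/
def opL3 (α : ℝ) (Ω ξ : ℝ → ℝ → ℝ) : ℝ → ℝ → ℝ := fun R β =>
  - DR ξ R β - (3/(1+R)) * Dbeta ξ R β + (-2 - 3/(1+R)) * ξ R β
  - (2/(Real.pi*α)) * tL12 Ω R * ξbar α R β
  + cω α Ω * (3 * ξbar α R β - DR (ξbar α) R β)

/-- Weighted Sobolev norm `H^m` with radial weight `w1` and angular weight `w2`:
`‖f‖ = Σ_{0≤k≤m} ‖(D_R^k f)√w1‖₂ + Σ_{i+j≤m−1} ‖(D_R^i D_β^{j+1} f)√w2‖₂`. -/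
def Hnorm (m : ℕ) (w1 w2 : ℝ → ℝ → ℝ) (f : ℝ → ℝ → ℝ) : ℝ :=
  (∑ k ∈ Finset.range (m+1),
    norm2 (fun R β => DR^[k] f R β * Real.sqrt (w1 R β)))
  + ∑ p ∈ (Finset.range (m+1) ×ˢ Finset.range (m+1)).filter
      (fun p => p.1 + p.2 + 1 ≤ m),
      norm2 (fun R β => DR^[p.1] (Dbeta^[p.2+1] f) R β * Real.sqrt (w2 R β))

/-- Sup of `|f|` over the domain `(0,∞)×(0,π/2)`. -/
def supDom (f : ℝ → ℝ → ℝ) : ℝ :=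
  ⨆ (R : Set.Ioi (0:ℝ)) (β : Set.Ioo (0:ℝ) (Real.pi/2)), |f R.1 β.1|

/-- The weighted `C¹` norm. -/
def C1norm (α : ℝ) (f : ℝ → ℝ → ℝ) : ℝ :=
  supDom f + supDom (fun R β => (1+R)/R * DR f R β)
  + supDom (fun R β =>
      (1 + (R * Real.sin (2*β) ^ α) ^ (-(1/40 : ℝ))) * Dbeta f R β)

/-- Boundedness of `f` on the domain. -/
def BddDom (f : ℝ → ℝ → ℝ) : Prop :=
  ∃ M : ℝ, ∀ R ∈ Set.Ioi (0:ℝ), ∀ β ∈ Set.Ioo (0:ℝ) (Real.pi/2), |f R β| ≤ M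

/-- Finiteness of the weighted `C¹` norm. -/
def C1Fin (α : ℝ) (f : ℝ → ℝ → ℝ) : Prop :=
  BddDom f ∧ BddDom (fun R β => (1+R)/R * DR f R β) ∧
  BddDom (fun R β => (1 + (R * Real.sin (2*β) ^ α) ^ (-(1/40 : ℝ))) * Dbeta f R β)

/-- The weighted `W^{l,∞}` norm. -/
def Wnorm (α : ℝ) (l : ℕ) (f : ℝ → ℝ → ℝ) : ℝ :=
  (∑ k ∈ Finset.range (l+1), supDom (DR^[k] f))
  + ∑ p ∈ (Finset.range (l+1) ×ˢ Finset.range (l+1)).filter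
      (fun p => p.1 + p.2 ≤ l ∧ 1 ≤ p.2),
      supDom (fun R β => Real.sin (2*β) ^ (-(α/5)) *
        DR^[p.1] (fun R' β' => Dbeta^[p.2] f R' β' / (α/10 + Real.sin (2*β'))) R β)

/-- Finiteness of the `W^{l,∞}` norm. -/
def WFin (α : ℝ) (l : ℕ) (f : ℝ → ℝ → ℝ) : Prop :=
  (∀ k ≤ l, BddDom (DR^[k] f)) ∧
  ∀ k j : ℕ, k + j ≤ l → 1 ≤ j →
    BddDom (fun R β => Real.sin (2*β) ^ (-(α/5)) *
      DR^[k] (fun R' β' => Dbeta^[j] f R' β' / (α/10 + Real.sin (2*β'))) R β)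

/-- `I(f)(x,y) = ∫₀ˣ f(z,y)/z dz`. -/
def Ifun (f : ℝ → ℝ → ℝ) : ℝ → ℝ → ℝ := fun x y => ∫ z in Set.Ioo (0:ℝ) x, f z y / z

/-- `D_S g = (1/α)(z ∂_z g + y ∂_y g)` in Cartesian variables. -/
def DScart (α : ℝ) (g : ℝ → ℝ → ℝ) : ℝ → ℝ → ℝ := fun a b =>
  (1/α) * (a * deriv (fun a' => g a' b) a + b * deriv (fun b' => g a b') b)

/-- `D_τ g = 2y ∂_y g − 2α (y²/(y²+z²)) D_S g` in Cartesian variables. -/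
def DTcart (α : ℝ) (g : ℝ → ℝ → ℝ) : ℝ → ℝ → ℝ := fun a b =>
  2*b * deriv (fun b' => g a b') b - 2*α*(b^2/(b^2+a^2)) * DScart α g a b

open Polynomial in
/-- Radial operator on polynomials in `u = 1/(1+R)`. -/
def Top (p : ℝ[X]) : ℝ[X] := derivative p * (X^2 - X)

open Polynomial in
/-- Angular operator on polynomials in `s = sin² β` (coefficients in `α`). -/
def Sop (P : ℝ[X][X]) : ℝ[X][X] :=
  4 * X * (1 - X) * derivative P - 2 * C X * X * P

open Polynomial in
/-- evaluation -/
def ev (a s : ℝ) (P : ℝ[X][X]) : ℝ := (P.map (evalRingHom a)).eval s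

open Polynomial in
lemma ev_bdd (P : ℝ[X][X]) : ∃ M : ℝ, 0 ≤ M ∧ ∀ a ∈ Icc (0:ℝ) 1, ∀ s ∈ Icc (0:ℝ) 1,
    |ev a s P| ≤ M := by
  induction P using Polynomial.induction_on' with
  | add p q hp hq =>
    obtain ⟨M, hM, h⟩ := hp
    obtain ⟨N, hN, h'⟩ := hq
    refine ⟨M + N, by positivity, fun a ha s hs => ?_⟩
    have : ev a s (p + q) = ev a s p + ev a s q := by simp [ev]
    rw [this]
    exact (abs_add_le _ _).trans (add_le_add (h a ha s hs) (h' a ha s hs))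
  | monomial n q =>
    obtain ⟨M, hM⟩ := (isCompact_Icc (a := (0:ℝ)) (b := 1)).exists_bound_of_continuousOn
      (f := fun a => q.eval a) q.continuous.continuousOn
    refine ⟨|M|, abs_nonneg _, fun a ha s hs => ?_⟩
    have : ev a s (monomial n q) = q.eval a * s ^ n := by simp [ev]
    rw [this, abs_mul]
    have h1 := hM a ha
    rw [Real.norm_eq_abs] at h1
    have h2 : |s ^ n| ≤ 1 := by
      rw [abs_of_nonneg (pow_nonneg hs.1 n)]
      exact pow_le_one₀ hs.1 hs.2
    calc _ ≤ |M| * 1 := mul_le_mul (h1.trans (le_abs_self M)) h2 (abs_nonneg _) (abs_nonneg _)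
      _ = |M| := mul_one _

open Polynomial in
lemma poly_bdd (p : ℝ[X]) : ∃ M : ℝ, 0 ≤ M ∧ ∀ R : ℝ, 0 < R → |p.eval (1/(1+R))| ≤ M := by
  obtain ⟨M, hM⟩ := (isCompact_Icc (a := (0:ℝ)) (b := 1)).exists_bound_of_continuousOn
      (f := fun a => p.eval a) p.continuous.continuousOn
  refine ⟨|M|, abs_nonneg _, fun R hR => ?_⟩
  have := hM (1/(1+R)) ⟨by positivity, by rw [div_le_one (by linarith)]; linarith⟩
  exact this.trans (le_abs_self M)

open Polynomial in
lemma DR_iter (k : ℕ) : ∀ (f : ℝ → ℝ → ℝ) (p : ℝ[X]) (h : ℝ → ℝ),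
    (∀ R ∈ Ioi (0:ℝ), ∀ β ∈ Ioo (0:ℝ) (Real.pi/2), f R β = p.eval (1/(1+R)) * h β) →
    ∀ R ∈ Ioi (0:ℝ), ∀ β ∈ Ioo (0:ℝ) (Real.pi/2),
      DR^[k] f R β = (Top^[k] p).eval (1/(1+R)) * h β := by
  induction k with
  | zero => intro f p h hf; simpa using hf
  | succ k ih =>
    intro f p h hf
    rw [Function.iterate_succ_apply, Function.iterate_succ_apply]
    apply ih
    intro R hR β hβ
    have hR0 : (0:ℝ) < R := hR
    have hne : (1 + R) ≠ 0 := by positivity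
    have hu : HasDerivAt (fun r : ℝ => 1/(1+r)) (-1/(1+R)^2) R := by
      have h1 := ((hasDerivAt_id R).const_add 1).inv hne
      simp only [one_div]
      exact h1
    have hp := ((p.hasDerivAt (1/(1+R))).comp R hu).mul_const (h β)
    have he : (fun r => f r β) =ᶠ[nhds R] (fun r => p.eval (1/(1+r)) * h β) := by
      filter_upwards [Ioi_mem_nhds hR0] with r hr using hf r hr β hβ
    have hd : deriv (fun r => f r β) R = _ := he.deriv_eq.trans hp.deriv
    unfold DR
    rw [hd]
    simp only [Top, eval_mul, eval_sub, eval_pow, eval_X]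
    field_simp
    ring

open Polynomial in
lemma hasDeriv_ang (α : ℝ) (P : ℝ[X][X]) (β : ℝ) (hβ : β ∈ Ioo (0:ℝ) (Real.pi/2)) :
    HasDerivAt (fun b => ev α (sin b ^ 2) P * Γf α b)
      (ev α (sin β ^ 2) (derivative P) * (2 * sin β * cos β) * Γf α β +
        ev α (sin β ^ 2) P * (- sin β * α * cos β ^ (α - 1))) β := by
  have hc : 0 < cos β := cos_pos_of_mem_Ioo ⟨by linarith [hβ.1, Real.pi_pos], hβ.2⟩
  have h1 : HasDerivAt (fun b => sin b ^ 2) (2 * sin β * cos β) β := by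
    have h := (hasDerivAt_sin β).pow 2
    simp only [Nat.cast_ofNat, Nat.add_one_sub_one, pow_one] at h
    exact h
  have h2 := ((P.map (evalRingHom α)).hasDerivAt (sin β ^ 2)).comp β h1
  have h3 := (hasDerivAt_cos β).rpow_const (p := α) (Or.inl hc.ne')
  have := h2.mul h3
  rw [derivative_map] at this
  exact this

open Polynomial in
lemma Dbeta_iter (α : ℝ) (j : ℕ) : ∀ (f : ℝ → ℝ → ℝ) (g : ℝ → ℝ) (P : ℝ[X][X]),
    (∀ R ∈ Ioi (0:ℝ), ∀ β ∈ Ioo (0:ℝ) (Real.pi/2),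
      f R β = g R * (ev α (sin β ^ 2) P * Γf α β)) →
    ∀ R ∈ Ioi (0:ℝ), ∀ β ∈ Ioo (0:ℝ) (Real.pi/2),
      Dbeta^[j] f R β = g R * (ev α (sin β ^ 2) (Sop^[j] P) * Γf α β) := by
  induction j with
  | zero => intro f g P hf; simpa using hf
  | succ j ih =>
    intro f g P hf
    rw [Function.iterate_succ_apply, Function.iterate_succ_apply]
    apply ih
    intro R hR β hβ
    have hc : 0 < cos β := cos_pos_of_mem_Ioo ⟨by linarith [hβ.1, Real.pi_pos], hβ.2⟩
    have hp := (hasDeriv_ang α P β hβ).const_mul (g R)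
    have he : (fun b => f R b) =ᶠ[nhds β] (fun b => g R * (ev α (sin b ^ 2) P * Γf α b)) := by
      filter_upwards [Ioo_mem_nhds hβ.1 hβ.2] with b hb using hf R hR b hb
    have hd : deriv (fun b => f R b) β = _ := he.deriv_eq.trans hp.deriv
    unfold Dbeta
    rw [hd]
    have hS : ev α (sin β ^ 2) (Sop P) = 4 * sin β ^ 2 * (1 - sin β ^ 2) *
        ev α (sin β ^ 2) (derivative P) - 2 * α * sin β ^ 2 * ev α (sin β ^ 2) P := by
      simp [ev, Sop]
    have hG : Γf α β = cos β ^ (α - 1) * cos β := by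
      rw [Γf, Real.rpow_sub_one hc.ne']; field_simp
    rw [hS, sin_two_mul, hG]
    have : 1 - sin β ^ 2 = cos β ^ 2 := by rw [← sin_sq_add_cos_sq β]; ring
    rw [this]
    ring

open Polynomial in
lemma Sop_iter1 (j : ℕ) : ∃ Q : ℝ[X][X], Sop^[j+1] 1 = C X * X * Q := by
  induction j with
  | zero => exact ⟨-2, by simp [Sop]; ring⟩
  | succ j ih =>
    obtain ⟨Q, hQ⟩ := ih
    rw [Function.iterate_succ_apply', hQ]
    refine ⟨4 * (1 - X) * (Q + X * derivative Q) - 2 * C X * X * Q, ?_⟩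
    simp only [Sop, derivative_mul, derivative_C, derivative_X]
    ring

open Polynomial in
lemma Sop_iter2 (j : ℕ) : ∃ A B : ℝ[X][X],
    Sop^[j+2] 1 = C X * X * ((1 - X) * A + C X * B) := by
  obtain ⟨Q, hQ⟩ := Sop_iter1 j
  rw [Function.iterate_succ_apply', hQ]
  refine ⟨4 * (Q + X * derivative Q), - 2 * X * Q, ?_⟩
  simp only [Sop, derivative_mul, derivative_C, derivative_X]
  ring

lemma weight_bd {α β : ℝ} (h0 : 0 < α) (h1 : α ≤ 1/1000) (hβ : β ∈ Ioo (0:ℝ) (Real.pi/2)) :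
    0 < sin β ∧ 0 < cos β ∧ 0 < sin (2*β) ∧ 0 ≤ Γf α β ∧ Γf α β ≤ 1 ∧
    0 ≤ sin (2*β) ^ (-(α/5)) ∧
    sin (2*β) ^ (-(α/5)) * Γf α β * sin β ≤ 1 := by
  have hc : 0 < cos β := cos_pos_of_mem_Ioo ⟨by linarith [hβ.1, Real.pi_pos], hβ.2⟩
  have hs : 0 < sin β := sin_pos_of_pos_of_lt_pi hβ.1 (by linarith [hβ.2, Real.pi_pos])
  have hsc : 0 < sin β * cos β := by positivity
  have h2 : 0 < sin (2*β) := by rw [sin_two_mul]; nlinarith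
  refine ⟨hs, hc, h2, by unfold Γf; positivity,
    Real.rpow_le_one hc.le (cos_le_one β) h0.le, by positivity, ?_⟩
  have hw : sin (2*β) ^ (-(α/5)) ≤ (sin β * cos β) ^ (-(α/5)) :=
    Real.rpow_le_rpow_of_nonpos hsc (by rw [sin_two_mul]; nlinarith) (by linarith)
  calc sin (2*β) ^ (-(α/5)) * Γf α β * sin β
      ≤ (sin β * cos β) ^ (-(α/5)) * Γf α β * sin β := by
        have : 0 ≤ Γf α β := by unfold Γf; positivity
        gcongr
    _ = sin β ^ (-(α/5) + 1) * cos β ^ (-(α/5) + α) := by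
        rw [Real.mul_rpow hs.le hc.le, Real.rpow_add hs, Real.rpow_add hc, Real.rpow_one, Γf]
        ring
    _ ≤ 1 * 1 := by
        apply mul_le_mul (Real.rpow_le_one hs.le (sin_le_one β) (by linarith))
          (Real.rpow_le_one hc.le (cos_le_one β) (by linarith)) (by positivity) (by norm_num)
    _ = 1 := by norm_num

/-- Pointwise bounds which imply bounds on `Wnorm` and `WFin`. -/
def PB (α B : ℝ) (c1 : ℕ → ℝ) (c2 : ℕ → ℕ → ℝ) (f : ℝ → ℝ → ℝ) : Prop :=
  (∀ k, ∀ R ∈ Ioi (0:ℝ), ∀ β ∈ Ioo (0:ℝ) (Real.pi/2), |DR^[k] f R β| ≤ B * c1 k) ∧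
  ∀ k j : ℕ, 1 ≤ j → ∀ R ∈ Ioi (0:ℝ), ∀ β ∈ Ioo (0:ℝ) (Real.pi/2),
    |Real.sin (2*β) ^ (-(α/5)) *
      DR^[k] (fun R' β' => Dbeta^[j] f R' β' / (α/10 + Real.sin (2*β'))) R β| ≤ B * c2 k j

lemma PB.wfin {α B : ℝ} {c1 : ℕ → ℝ} {c2 : ℕ → ℕ → ℝ} {f : ℝ → ℝ → ℝ}
    (h : PB α B c1 c2 f) : WFin α 7 f :=
  ⟨fun k _ => ⟨_, h.1 k⟩, fun k j _ hj => ⟨_, h.2 k j hj⟩⟩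

/-- The total constant. -/
def tot (c1 : ℕ → ℝ) (c2 : ℕ → ℕ → ℝ) : ℝ :=
  (∑ k ∈ Finset.range (7+1), c1 k)
  + ∑ p ∈ (Finset.range (7+1) ×ˢ Finset.range (7+1)).filter
      (fun p => p.1 + p.2 ≤ 7 ∧ 1 ≤ p.2), c2 p.1 p.2

lemma supDom_le {f : ℝ → ℝ → ℝ} {M : ℝ} (hM : 0 ≤ M)
    (h : ∀ R ∈ Ioi (0:ℝ), ∀ β ∈ Ioo (0:ℝ) (Real.pi/2), |f R β| ≤ M) : supDom f ≤ M :=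
  Real.iSup_le (fun R => Real.iSup_le (fun β => h R.1 R.2 β.1 β.2) hM) hM

lemma PB.wnorm {α B : ℝ} {c1 : ℕ → ℝ} {c2 : ℕ → ℕ → ℝ} {f : ℝ → ℝ → ℝ}
    (h : PB α B c1 c2 f) : Wnorm α 7 f ≤ B * tot c1 c2 := by
  have hb : (Real.pi/4) ∈ Ioo (0:ℝ) (Real.pi/2) :=
    ⟨by linarith [Real.pi_pos], by linarith [Real.pi_pos]⟩
  have h1 : (1:ℝ) ∈ Ioi (0:ℝ) := by simp
  unfold Wnorm tot
  rw [mul_add, Finset.mul_sum, Finset.mul_sum]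
  apply add_le_add
  · exact Finset.sum_le_sum fun k _ =>
      supDom_le ((abs_nonneg _).trans (h.1 k 1 h1 _ hb)) (h.1 k)
  · refine Finset.sum_le_sum fun p hp => ?_
    have hj := (Finset.mem_filter.1 hp).2.2
    exact supDom_le ((abs_nonneg _).trans (h.2 p.1 p.2 hj 1 h1 _ hb)) (h.2 p.1 p.2 hj)

lemma sin_sq_mem (β : ℝ) : sin β ^ 2 ∈ Icc (0:ℝ) 1 := ⟨sq_nonneg _, sin_sq_le_one β⟩

open Polynomial in
lemma ev_Q (α s : ℝ) (Q : ℝ[X][X]) : ev α s (C X * X * Q) = α * s * ev α s Q := by simp [ev]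

open Polynomial in
lemma ev_AB (α s : ℝ) (A B : ℝ[X][X]) : ev α s (C X * X * ((1 - X) * A + C X * B))
    = α * s * ((1 - s) * ev α s A + α * ev α s B) := by simp [ev]

open Polynomial in
lemma DRDb (α K : ℝ) (p : ℝ[X]) (f : ℝ → ℝ → ℝ)
    (hf : ∀ R ∈ Ioi (0:ℝ), ∀ β ∈ Ioo (0:ℝ) (Real.pi/2),
      f R β = K * p.eval (1/(1+R)) * Γf α β) (w : ℝ → ℝ) (k j : ℕ) :
    ∀ R ∈ Ioi (0:ℝ), ∀ β ∈ Ioo (0:ℝ) (Real.pi/2),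
      DR^[k] (fun R' β' => Dbeta^[j] f R' β' / w β') R β =
      (Top^[k] p).eval (1/(1+R)) * (K * (ev α (sin β ^ 2) (Sop^[j] 1) * Γf α β) / w β) := by
  apply DR_iter k _ p (fun β => K * (ev α (sin β ^ 2) (Sop^[j] 1) * Γf α β) / w β)
  intro R hR β hβ
  rw [Dbeta_iter α j f (fun R => K * p.eval (1/(1+R))) 1 _ R hR β hβ]
  · ring
  · intro R hR β hβ
    rw [hf R hR β hβ]; simp [ev]

open Polynomial in
lemma main_bounds (p : ℝ[X]) : ∃ (c1 d1 : ℕ → ℝ) (c2 d2 : ℕ → ℕ → ℝ),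
    ∀ (α K : ℝ) (f : ℝ → ℝ → ℝ), 0 < α → α ≤ 1/1000 →
    (∀ R ∈ Ioi (0:ℝ), ∀ β ∈ Ioo (0:ℝ) (Real.pi/2),
      f R β = K * p.eval (1/(1+R)) * Γf α β) →
    PB α |K| c1 c2 f ∧ PB α (|K| * α) d1 d2 (Dbeta f) := by
  choose Mp hMp0 hMp using fun k => poly_bdd (Top^[k] p)
  choose Q hQ using Sop_iter1
  choose A B hAB using Sop_iter2
  choose MQ hMQ0 hMQ using fun j => ev_bdd (Q j)
  choose MA hMA0 hMA using fun j => ev_bdd (A j)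
  choose MB hMB0 hMB using fun j => ev_bdd (B j)
  refine ⟨fun k => Mp k, fun k => Mp k * MQ 0, fun k j => Mp k * (10 * MQ (j-1)),
    fun k j => Mp k * (MA (j-1) + 10 * MB (j-1)), fun α K f h0 h1 hf => ⟨⟨?_, ?_⟩, ⟨?_, ?_⟩⟩⟩
  · intro k R hR β hβ
    obtain ⟨hs, hc, h2, hG0, hG1, hw, hwG⟩ := weight_bd h0 h1 hβ
    rw [DR_iter k f p (fun β => K * Γf α β)
      (fun R hR β hβ => by rw [hf R hR β hβ]; ring) R hR β hβ]
    rw [abs_mul, abs_mul, abs_of_nonneg hG0]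
    calc _ ≤ Mp k * (|K| * 1) := by
            have := hMp k R hR
            have := hMp0 k
            gcongr
      _ = _ := by ring
  · intro k j hj R hR β hβ
    obtain ⟨hs, hc, h2, hG0, hG1, hw, hwG⟩ := weight_bd h0 h1 hβ
    have ha : α ∈ Icc (0:ℝ) 1 := ⟨h0.le, by linarith⟩
    rw [DRDb α K p f hf (fun β => α/10 + sin (2*β)) k j R hR β hβ]
    obtain ⟨j, rfl⟩ : ∃ i, j = i + 1 := ⟨j - 1, by omega⟩
    rw [hQ, ev_Q]
    beta_reduce
    rw [Nat.add_sub_cancel]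
    have hq := hMQ j α ha _ (sin_sq_mem β)
    have hD : 0 < α/10 + sin (2*β) := by positivity
    have hr : α / (α/10 + sin (2*β)) ≤ 10 := by rw [div_le_iff₀ hD]; linarith
    have e : sin (2*β) ^ (-(α/5)) * (eval (1/(1+R)) (Top^[k] p) *
        (K * (α * sin β ^ 2 * ev α (sin β ^ 2) (Q j) * Γf α β) / (α/10 + sin (2*β)))) =
        K * (eval (1/(1+R)) (Top^[k] p) * ((α / (α/10 + sin (2*β))) *
          ((sin (2*β) ^ (-(α/5)) * Γf α β * sin β) * sin β) * ev α (sin β ^ 2) (Q j))) := by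
      ring
    rw [e]
    simp only [abs_mul (α := ℝ) K, abs_mul (eval _ _), abs_mul _ (ev _ _ _)]
    rw [abs_of_nonneg (by positivity : 0 ≤ (α / (α/10 + sin (2*β))) *
          ((sin (2*β) ^ (-(α/5)) * Γf α β * sin β) * sin β))]
    calc _ ≤ |K| * (Mp k * ((10 * (1 * 1)) * MQ j)) := by
            have := hMp k R hR
            have := sin_le_one β
            have := hMp0 k
            gcongr
      _ = _ := by ring
  · intro k R hR β hβ
    obtain ⟨hs, hc, h2, hG0, hG1, hw, hwG⟩ := weight_bd h0 h1 hβ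
    have ha : α ∈ Icc (0:ℝ) 1 := ⟨h0.le, by linarith⟩
    have := DRDb α K p f hf (fun _ => 1) k 1 R hR β hβ
    simp only [div_one, Function.iterate_one] at this
    change |DR^[k] (fun R' β' => Dbeta f R' β') R β| ≤ _
    rw [this]
    have hq1 := hQ 0
    simp only [zero_add, Function.iterate_one] at hq1
    rw [hq1, ev_Q]
    have hq := hMQ 0 α ha _ (sin_sq_mem β)
    have hss := sin_sq_mem β
    simp only [abs_mul, abs_of_nonneg hG0, abs_of_nonneg hss.1, abs_of_nonneg h0.le]
    calc _ ≤ Mp k * (|K| * (α * 1 * MQ 0 * 1)) := by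
            have := hMp k R hR
            have := hMp0 k
            have := hMQ0 0
            have := hss.2
            have := hss.1
            gcongr
      _ = _ := by ring
  · intro k j hj R hR β hβ
    obtain ⟨hs, hc, h2, hG0, hG1, hw, hwG⟩ := weight_bd h0 h1 hβ
    have ha : α ∈ Icc (0:ℝ) 1 := ⟨h0.le, by linarith⟩
    obtain ⟨j, rfl⟩ : ∃ i, j = i + 1 := ⟨j - 1, by omega⟩
    simp only [← Function.iterate_succ_apply]
    rw [DRDb α K p f hf (fun β => α/10 + sin (2*β)) k (j+1+1) R hR β hβ]
    rw [show j + 1 + 1 = j + 2 from rfl, hAB, ev_AB]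
    beta_reduce
    rw [Nat.add_sub_cancel]
    have hqA := hMA j α ha _ (sin_sq_mem β)
    have hqB := hMB j α ha _ (sin_sq_mem β)
    have hD : 0 < α/10 + sin (2*β) := by positivity
    have hr : α / (α/10 + sin (2*β)) ≤ 10 := by rw [div_le_iff₀ hD]; linarith
    have hs1 := sin_le_one β
    have hc1 := cos_le_one β
    have hr2 : sin β * cos β ^ 2 / (α/10 + sin (2*β)) ≤ 1 := by
      rw [div_le_iff₀ hD, sin_two_mul]
      have : sin β * cos β ^ 2 ≤ sin β * cos β := by
        have : cos β ^ 2 ≤ cos β := by nlinarith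
        gcongr
      nlinarith [mul_pos hs hc]
    have hcs : 1 - sin β ^ 2 = cos β ^ 2 := by rw [← sin_sq_add_cos_sq β]; ring
    have e : sin (2*β) ^ (-(α/5)) * (eval (1/(1+R)) (Top^[k] p) *
        (K * (α * sin β ^ 2 * ((1 - sin β ^ 2) * ev α (sin β ^ 2) (A j) +
          α * ev α (sin β ^ 2) (B j)) * Γf α β) / (α/10 + sin (2*β)))) =
        K * α * (eval (1/(1+R)) (Top^[k] p) *
          ((sin β * cos β ^ 2 / (α/10 + sin (2*β))) *
            (sin (2*β) ^ (-(α/5)) * Γf α β * sin β) * ev α (sin β ^ 2) (A j) +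
          (α / (α/10 + sin (2*β))) *
          ((sin (2*β) ^ (-(α/5)) * Γf α β * sin β) * sin β) * ev α (sin β ^ 2) (B j))) := by
      rw [hcs]; ring
    rw [e, abs_mul (K * α), abs_mul K α, abs_of_pos h0, abs_mul (eval _ _)]
    have t1 : |(sin β * cos β ^ 2 / (α/10 + sin (2*β))) *
            (sin (2*β) ^ (-(α/5)) * Γf α β * sin β) * ev α (sin β ^ 2) (A j)| ≤ MA j := by
      rw [abs_mul, abs_of_nonneg (by positivity : 0 ≤ (sin β * cos β ^ 2 / (α/10 + sin (2*β))) *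
            (sin (2*β) ^ (-(α/5)) * Γf α β * sin β))]
      calc _ ≤ (1 * 1) * MA j := by gcongr
        _ = _ := by ring
    have t2 : |(α / (α/10 + sin (2*β))) *
          ((sin (2*β) ^ (-(α/5)) * Γf α β * sin β) * sin β) * ev α (sin β ^ 2) (B j)|
          ≤ 10 * MB j := by
      rw [abs_mul, abs_of_nonneg (by positivity : 0 ≤ (α / (α/10 + sin (2*β))) *
          ((sin (2*β) ^ (-(α/5)) * Γf α β * sin β) * sin β))]
      calc _ ≤ (10 * (1 * 1)) * MB j := by gcongr
        _ = _ := by ring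
    have t3 := (abs_add_le _ _).trans (add_le_add t1 t2)
    have := hMp k R hR
    have := hMp0 k
    gcongr

lemma cst_lower : ∃ c0 : ℝ, 0 < c0 ∧ ∀ α : ℝ, 0 < α → α ≤ 1/1000 → c0 ≤ cst α := by
  have hpi := Real.pi_pos
  have hcont : ∀ a : ℝ, 0 < a → Continuous (fun β => Γf a β * sin (2*β)) := fun a ha => by
    unfold Γf
    exact (continuous_cos.rpow_const (fun _ => Or.inr ha.le)).mul (by fun_prop)
  refine ⟨cst 1, ?_, fun α h0 h1 => ?_⟩
  · unfold cst
    apply mul_pos (by positivity)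
    rw [← integral_Ioc_eq_integral_Ioo, ← intervalIntegral.integral_of_le (by linarith)]
    apply intervalIntegral.intervalIntegral_pos_of_pos_on
      ((hcont 1 one_pos).intervalIntegrable _ _) _ (by linarith)
    intro β hβ
    have hc : 0 < cos β := cos_pos_of_mem_Ioo ⟨by linarith [hβ.1, Real.pi_pos], hβ.2⟩
    have hs : 0 < sin (2*β) := sin_pos_of_pos_of_lt_pi (by linarith [hβ.1]) (by linarith [hβ.2])
    unfold Γf
    positivity
  · unfold cst
    apply mul_le_mul_of_nonneg_left _ (by positivity)
    apply setIntegral_mono_on _ _ measurableSet_Ioo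
    · intro β hβ
      obtain ⟨hs, hc, h2, -⟩ := weight_bd h0 h1 hβ
      apply mul_le_mul_of_nonneg_right _ h2.le
      exact Real.rpow_le_rpow_of_exponent_ge hc (cos_le_one β) (by linarith)
    · exact ((hcont 1 one_pos).integrableOn_Icc).mono_set Ioo_subset_Icc_self
    · exact ((hcont α h0).integrableOn_Icc).mono_set Ioo_subset_Icc_self

/-- `Γ, Ω̄, η̄` belong to `W^{7,∞}`, with quantitative bounds. -/
theorem profiles_in_W7infty :
    ∃ C : ℝ, ∀ α : ℝ, 0 < α → α ≤ 1/1000 →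
      WFin α 7 (fun _ β => Γf α β) ∧ WFin α 7 (Ωbar α) ∧ WFin α 7 (ηbar α) ∧
      Wnorm α 7 (fun _ β => Γf α β) ≤ C ∧
      Wnorm α 7 (fun R β => (1+R)^2/R * Ωbar α R β)
          + Wnorm α 7 (fun R β => (1+R)^2/R * ηbar α R β) ≤ C * α ∧
      Wnorm α 7 (Dbeta (Ωbar α)) + Wnorm α 7 (Dbeta (ηbar α)) ≤ C * α^2 := by
  obtain ⟨c0, hc0, hcst⟩ := cst_lower
  obtain ⟨a1, a1', a2, a2', hA⟩ := main_bounds 1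
  obtain ⟨b1, b1', b2, b2', hB⟩ := main_bounds (3 * (Polynomial.X - Polynomial.X^2))
  obtain ⟨e1, e1', e2, e2', hE⟩ := main_bounds (6 * (Polynomial.X^2 - Polynomial.X^3))
  obtain ⟨f1, f1', f2, f2', hF⟩ := main_bounds 3
  obtain ⟨g1, g1', g2, g2', hG⟩ := main_bounds (6 * Polynomial.X)
  refine ⟨|tot a1 a2| + (|tot f1 f2| + |tot g1 g2|) / c0 + (|tot b1' b2'| + |tot e1' e2'|) / c0,
    fun α h0 h1 => ?_⟩
  have hc := hcst α h0 h1
  have hcp : 0 < cst α := hc0.trans_le hc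
  have hK : |α / cst α| ≤ α / c0 := by
    rw [abs_of_pos (by positivity)]
    gcongr
  have HA := (hA α 1 (fun _ β => Γf α β) h0 h1 (fun R hR β hβ => by simp)).1
  have HB := hB α (α / cst α) (Ωbar α) h0 h1 (fun R hR β hβ => by
    have hR0 : (0:ℝ) < R := hR
    simp only [Ωbar, Polynomial.eval_mul, Polynomial.eval_sub, Polynomial.eval_pow,
      Polynomial.eval_X, Polynomial.eval_ofNat]
    field_simp
    ring)
  have HE := hE α (α / cst α) (ηbar α) h0 h1 (fun R hR β hβ => by
    have hR0 : (0:ℝ) < R := hR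
    simp only [ηbar, Polynomial.eval_mul, Polynomial.eval_sub, Polynomial.eval_pow,
      Polynomial.eval_X, Polynomial.eval_ofNat]
    field_simp
    ring)
  have HF := (hF α (α / cst α) (fun R β => (1+R)^2/R * Ωbar α R β) h0 h1 (fun R hR β hβ => by
    have hR0 : (0:ℝ) < R := hR
    simp only [Ωbar, Polynomial.eval_ofNat]
    field_simp)).1
  have HG := (hG α (α / cst α) (fun R β => (1+R)^2/R * ηbar α R β) h0 h1 (fun R hR β hβ => by
    have hR0 : (0:ℝ) < R := hR
    simp only [ηbar, Polynomial.eval_mul, Polynomial.eval_X, Polynomial.eval_ofNat]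
    field_simp)).1
  have key : ∀ t : ℝ, |α / cst α| * t ≤ α / c0 * |t| := fun t =>
    (mul_le_mul_of_nonneg_left (le_abs_self t) (abs_nonneg _)).trans
      (mul_le_mul_of_nonneg_right hK (abs_nonneg t))
  refine ⟨HA.wfin, HB.1.wfin, HE.1.wfin, ?_, ?_, ?_⟩
  · have := HA.wnorm
    rw [abs_one, one_mul] at this
    have h2 := le_abs_self (tot a1 a2)
    have : 0 ≤ (|tot f1 f2| + |tot g1 g2|) / c0 := by positivity
    have : 0 ≤ (|tot b1' b2'| + |tot e1' e2'|) / c0 := by positivity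
    linarith
  · have t1 := HF.wnorm.trans (key _)
    have t2 := HG.wnorm.trans (key _)
    have : 0 ≤ |tot a1 a2| * α := by positivity
    have : 0 ≤ (|tot b1' b2'| + |tot e1' e2'|) / c0 * α := by positivity
    have e : (|tot f1 f2| + |tot g1 g2|) / c0 * α =
      α / c0 * |tot f1 f2| + α / c0 * |tot g1 g2| := by ring
    linarith
  · have t1 := HB.2.wnorm
    have t2 := HE.2.wnorm
    have k1 := mul_le_mul_of_nonneg_right (key (tot b1' b2')) h0.le
    have k2 := mul_le_mul_of_nonneg_right (key (tot e1' e2')) h0.le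
    have : 0 ≤ |tot a1 a2| * α^2 := by positivity
    have : 0 ≤ (|tot f1 f2| + |tot g1 g2|) / c0 * α^2 := by positivity
    have e : (|tot b1' b2'| + |tot e1' e2'|) / c0 * α^2 =
      α / c0 * |tot b1' b2'| * α + α / c0 * |tot e1' e2'| * α := by ring
    linarith

end Paper
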